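/- Let q⁰, q¹, …, qᵐ be pairwise mutually singular probability measures on a measurable space X and b ∈ ℝᵐ, and let g(λ) = inf over probability measures p of [KL(q⁰‖p) + Σᵢ λᵢ (KL(qⁱ‖p) − bᵢ)] for λ ∈ ℝ₊ᵐ. Then sup_{λ ∈ ℝ₊ᵐ} g(λ) < ∞ if and only if Σ_{i=1}^m e^{−bᵢ} < 1. -/

import Mathlib

open MeasureTheory

/-- The Kullback–Leibler divergence `KL(μ‖ν)`, with values in `EReal`. -/
noncomputable def KL {X : Type*} [MeasurableSpace X] (μ ν : Measure X) : EReal :=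
  open Classical in
  if μ ≪ ν ∧ Integrable (llr μ ν) μ then ((∫ x, llr μ ν x ∂μ : ℝ) : EReal) else ⊤

/-- The dual function `g(λ) = inf over probability measures p of
`KL(q⁰‖p) + ∑ i, λ i * (KL(qⁱ‖p) − b i)`. -/
noncomputable def dualFn {X : Type*} [MeasurableSpace X] {m : ℕ}
    (q0 : Measure X) (qi : Fin m → Measure X) (b : Fin m → ℝ) (l : Fin m → ℝ) : EReal :=
  ⨅ p : {p : Measure X // IsProbabilityMeasure p},
    KL q0 p.1 + ∑ i, (l i : EReal) * (KL (qi i) p.1 - (b i : EReal))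

lemma KL_ge {X : Type*} [MeasurableSpace X] (q p : Measure X) [IsProbabilityMeasure q]
    [IsProbabilityMeasure p] (A : Set X) (hA : q Aᶜ = 0) (c : ℝ) (hc : 0 < c) :
    ((1 + Real.log c - c * p.real A : ℝ) : EReal) ≤ KL q p := by
  unfold KL
  split_ifs with h
  swap
  · exact le_top
  rw [EReal.coe_le_coe_iff]
  obtain ⟨hac, hint⟩ := h
  have hz : Integrable (fun x => (p.rnDeriv q x).toReal) q := Measure.integrable_toReal_rnDeriv
  have h1 : ∫ x, (p.rnDeriv q x).toReal ∂q ≤ p.real A := by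
    have : q.restrict A = q := Measure.restrict_eq_self_of_ae_mem (by
      rw [ae_iff]; exact hA)
    calc _ = ∫ x in A, (p.rnDeriv q x).toReal ∂q := by rw [this]
      _ ≤ _ := Measure.setIntegral_toReal_rnDeriv_le (measure_ne_top _ _)
  have h2 : ∫ x, (1 + Real.log c - c * (p.rnDeriv q x).toReal) ∂q ≤ ∫ x, llr q p x ∂q := by
    apply integral_mono_ae ((integrable_const _).sub (hz.const_mul c)) hint
    filter_upwards [neg_llr hac, Measure.rnDeriv_pos' hac, p.rnDeriv_lt_top q] with x h3 h4 h5
    have h6 : 0 < (p.rnDeriv q x).toReal := ENNReal.toReal_pos h4.ne' h5.ne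
    have h7 : llr q p x = - Real.log (p.rnDeriv q x).toReal := by
      have : - llr q p x = llr p q x := h3
      rw [← neg_neg (llr q p x), this, llr]
    have h8 := Real.log_le_sub_one_of_pos (mul_pos hc h6)
    rw [Real.log_mul hc.ne' h6.ne'] at h8
    rw [h7, Pi.sub_apply]
    linarith
  rw [integral_sub (integrable_const _) (hz.const_mul c), integral_const_mul] at h2
  simp at h2
  nlinarith

lemma KL_mix {X : Type*} [MeasurableSpace X] (q ν : Measure X) [IsProbabilityMeasure q]
    [IsFiniteMeasure ν] (h : ν ⟂ₘ q) (a : ℝ) (ha : 0 < a) :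
    KL q (ENNReal.ofReal a • q + ν) = ((- Real.log a : ℝ) : EReal) := by
  have : IsFiniteMeasure (ENNReal.ofReal a • q) := Measure.smul_finite _ ENNReal.ofReal_ne_top
  have hac : q ≪ ENNReal.ofReal a • q + ν := by
    intro s hs
    simp only [Measure.coe_add, Measure.coe_smul, Pi.add_apply, Pi.smul_apply, smul_eq_mul,
      add_eq_zero, mul_eq_zero, ENNReal.ofReal_eq_zero] at hs
    rcases hs.1 with h | h
    · linarith
    · exact h
  have hl : llr q (ENNReal.ofReal a • q + ν) =ᵐ[q] fun _ => - Real.log a := by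
    filter_upwards [neg_llr hac, Measure.rnDeriv_add (ENNReal.ofReal a • q) ν q,
      Measure.rnDeriv_smul_left_of_ne_top q q (r := ENNReal.ofReal a) ENNReal.ofReal_ne_top,
      q.rnDeriv_self, h.rnDeriv_ae_eq_zero] with x h1 h2 h3 h4 h5
    have h7 : - llr q (ENNReal.ofReal a • q + ν) x = llr (ENNReal.ofReal a • q + ν) q x := h1
    rw [← neg_neg (llr q _ x), h7, llr, h2]
    simp [h3, h4, h5, ha.le]
  have hint : Integrable (llr q (ENNReal.ofReal a • q + ν)) q :=
    (integrable_congr hl).2 (integrable_const _)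
  rw [KL, if_pos ⟨hac, hint⟩, integral_congr_ae hl]
  simp

lemma ereal_coe_sum {ι : Type*} (s : Finset ι) (f : ι → ℝ) :
    ((∑ i ∈ s, f i : ℝ) : EReal) = ∑ i ∈ s, (f i : EReal) := by
  classical
  induction s using Finset.induction_on with
  | empty => simp
  | insert a s ha ih => rw [Finset.sum_insert ha, Finset.sum_insert ha, EReal.coe_add, ih]

lemma exists_disj {X ι : Type*} [MeasurableSpace X] [Countable ι] (Q : ι → Measure X)
    (h : Pairwise fun i j => Q i ⟂ₘ Q j) :
    ∃ A : ι → Set X, (∀ i, MeasurableSet (A i)) ∧ (∀ i, Q i (A i)ᶜ = 0) ∧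
      Pairwise fun i j => Disjoint (A i) (A j) := by
  have h' : ∀ i j, ∃ s : Set X, i ≠ j → MeasurableSet s ∧ Q i s = 0 ∧ Q j sᶜ = 0 := by
    intro i j
    by_cases hij : i = j
    · exact ⟨∅, fun hne => absurd hij hne⟩
    · obtain ⟨s, hs⟩ := h hij
      exact ⟨s, fun _ => hs⟩
  choose s hs' using h'
  have hs : ∀ {i j}, i ≠ j → MeasurableSet (s i j) := fun hij => (hs' _ _ hij).1
  have h1 : ∀ {i j}, i ≠ j → Q i (s i j) = 0 := fun hij => (hs' _ _ hij).2.1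
  have h2 : ∀ {i j}, i ≠ j → Q j (s i j)ᶜ = 0 := fun hij => (hs' _ _ hij).2.2
  refine ⟨fun i => ⋂ j, ⋂ (_ : i ≠ j), ((s i j)ᶜ ∩ s j i), ?_, ?_, ?_⟩
  · intro i
    exact MeasurableSet.iInter fun j => MeasurableSet.iInter fun hj =>
      (hs hj).compl.inter (hs hj.symm)
  · intro i
    simp only [Set.compl_iInter, Set.compl_inter, compl_compl]
    refine measure_iUnion_null fun j => measure_iUnion_null fun hj => ?_
    exact measure_union_null (h1 hj) (h2 hj.symm)
  · intro i j hij
    rw [Set.disjoint_left]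
    intro x hi hj
    simp only [Set.mem_iInter] at hi hj
    exact (hi j hij).1 (hj i hij.symm).2

theorem stmt9 {X : Type*} [MeasurableSpace X] {m : ℕ}
    (q0 : Measure X) [IsProbabilityMeasure q0]
    (qi : Fin m → Measure X) (hqi : ∀ i, IsProbabilityMeasure (qi i))
    (hsing0 : ∀ i, q0 ⟂ₘ qi i)
    (hsing : Pairwise fun i j => qi i ⟂ₘ qi j)
    (b : Fin m → ℝ) :
    (⨆ l ∈ {l : Fin m → ℝ | ∀ i, 0 ≤ l i}, dualFn q0 qi b l) < (⊤ : EReal)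
      ↔ ∑ i, Real.exp (-b i) < 1 := by
  constructor
  · intro hlt
    by_contra! hS
    -- disjoint supports
    obtain ⟨A, hAm, hA0, hAd⟩ := exists_disj (fun o : Option (Fin m) => o.elim q0 qi) (by
      rintro (_ | i) (_ | j) hij
      · exact absurd rfl hij
      · exact hsing0 j
      · exact (hsing0 i).symm
      · exact hsing (by simpa using hij))
    have key : ∀ t : ℝ, 0 < t → ((1 + Real.log t : ℝ) : EReal) ≤
        ⨆ l ∈ {l : Fin m → ℝ | ∀ i, 0 ≤ l i}, dualFn q0 qi b l := by
      intro t ht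
      refine le_trans ?_ (le_iSup₂ (f := fun (l : Fin m → ℝ)
        (_ : l ∈ {l : Fin m → ℝ | ∀ i, 0 ≤ l i}) => dualFn q0 qi b l)
        (fun i => t * Real.exp (-b i)) (fun i => by positivity))
      refine le_iInf fun ⟨p, hp⟩ => ?_
      have h0 := KL_ge q0 p (A none) (hA0 none) t ht
      have hi : ∀ i, ((t * (Real.exp (-b i) - p.real (A (some i))) : ℝ) : EReal) ≤
          ((t * Real.exp (-b i) : ℝ) : EReal) * (KL (qi i) p - (b i : EReal)) := by
        intro i
        have h1 := KL_ge (qi i) p (A (some i)) (hA0 (some i)) (Real.exp (b i)) (Real.exp_pos _)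
        have h2 := EReal.sub_le_sub h1 (le_refl (b i : EReal))
        have h3 := mul_le_mul_of_nonneg_left h2
          (show (0 : EReal) ≤ ((t * Real.exp (-b i) : ℝ) : EReal) by
            exact_mod_cast (by positivity : 0 ≤ t * Real.exp (-b i)))
        refine le_trans (le_of_eq ?_) h3
        rw [← EReal.coe_sub, ← EReal.coe_mul]
        congr 1
        rw [Real.log_exp, Real.exp_neg]
        have := Real.exp_pos (b i)
        field_simp
        ring
      have hsum : ∑ o, p.real (A o) ≤ 1 := by
        rw [← measureReal_biUnion_finset (fun i _ j _ hij => hAd hij) (fun i _ => hAm i)]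
        exact measureReal_le_one
      rw [Fintype.sum_option] at hsum
      have h4 := add_le_add h0 (Finset.sum_le_sum fun i (_ : i ∈ Finset.univ) => hi i)
      refine le_trans ?_ h4
      rw [← ereal_coe_sum, ← EReal.coe_add, EReal.coe_le_coe_iff, ← Finset.mul_sum,
        Finset.sum_sub_distrib]
      nlinarith
    refine hlt.ne (EReal.eq_top_iff_forall_lt _ |>.2 fun y => ?_)
    refine lt_of_lt_of_le ?_ (key (Real.exp y) (Real.exp_pos _))
    rw [Real.log_exp]
    exact_mod_cast (by linarith : y < 1 + y)
  · intro hS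
    set S := ∑ i, Real.exp (-b i) with hSdef
    refine lt_of_le_of_lt (b := ((- Real.log (1 - S) : ℝ) : EReal)) ?_ (EReal.coe_lt_top _)
    refine iSup₂_le fun l _ => ?_
    have hfs : ∀ s : Finset (Fin m),
        IsFiniteMeasure (∑ i ∈ s, ENNReal.ofReal (Real.exp (-b i)) • qi i) := by
      intro s
      constructor
      rw [Measure.finsetSum_apply]
      simp [ENNReal.sum_lt_top]
    have hms : ∀ (ν : Measure X) (s : Finset (Fin m)), (∀ i ∈ s, qi i ⟂ₘ ν) →
        (∑ i ∈ s, ENNReal.ofReal (Real.exp (-b i)) • qi i) ⟂ₘ ν := by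
      intro ν s
      induction s using Finset.induction_on with
      | empty => intro _; simp
      | insert a s ha ih =>
        intro h
        rw [Finset.sum_insert ha]
        exact ((h a (by simp)).smul _).add_left (ih fun i hi => h i (by simp [hi]))
    set p : Measure X := ENNReal.ofReal (1 - S) • q0 +
      ∑ i, ENNReal.ofReal (Real.exp (-b i)) • qi i with hp
    have hpp : IsProbabilityMeasure p := by
      constructor
      rw [hp, Measure.add_apply, Measure.finsetSum_apply]
      simp only [Measure.smul_apply, measure_univ, smul_eq_mul, mul_one]
      rw [← ENNReal.ofReal_sum_of_nonneg (fun i _ => (Real.exp_pos _).le),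
        ← ENNReal.ofReal_add (by linarith) (Finset.sum_nonneg fun i _ => (Real.exp_pos _).le)]
      simp [hSdef]
    refine (iInf_le _ ⟨p, hpp⟩).trans ?_
    have h0 : KL q0 p = ((- Real.log (1 - S) : ℝ) : EReal) := by
      have := hfs Finset.univ
      exact KL_mix q0 _ (hms q0 _ fun i _ => (hsing0 i).symm) _ (by linarith)
    have h1 : ∀ i, KL (qi i) p = (b i : EReal) := by
      intro i
      have := hfs (Finset.univ.erase i)
      have : IsFiniteMeasure (ENNReal.ofReal (1 - S) • q0) :=
        Measure.smul_finite _ ENNReal.ofReal_ne_top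
      have hpe : p = ENNReal.ofReal (Real.exp (-b i)) • qi i + (ENNReal.ofReal (1 - S) • q0 +
          ∑ j ∈ Finset.univ.erase i, ENNReal.ofReal (Real.exp (-b j)) • qi j) := by
        rw [hp, ← Finset.add_sum_erase _ _ (Finset.mem_univ i)]
        abel
      rw [hpe, KL_mix (qi i) _ _ _ (Real.exp_pos _)]
      · simp
      · exact ((hsing0 i).smul _).add_left (hms _ _ fun j hj => hsing (Finset.ne_of_mem_erase hj))
    simp only [h0, h1]
    have : ∀ i, (b i : EReal) - (b i : EReal) = 0 := fun i => by
      rw [← EReal.coe_sub]; simp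
    simp [this]
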